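/- Let α, β, T_c > 0. Then ∫₀^{T_c} (Γ(α+1, β(T_c−x))/(β Γ(α))) · (β^α x^(α−1) e^(−βx)/Γ(α)) dx = α γ(α, βT_c)/(β Γ(α)) − (T_c/Γ(α)²) Σ_{n=0}^∞ ((−1)ⁿ (βT_c)^{2α+n}/(n!(α+n+1))) B(α+n+2, α) ₁F₁(α; 2α+n+2; −βT_c). -/

import Mathlib

/-!
Since `Γ(α+1, y) = Γ(α+1) − γ(α+1, y)` and `Γ(α+1) = αΓ(α)`, the integrand splits into two parts.
The constant part, after the substitution `t = βx`, is the first term on the right-hand side.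
In the other part, `γ(α+1, β(T_c−x))` is expanded in its power series (`hasSum_lowerGamma`) and
integrated term by term, which leaves Beta-type integrals with an exponential weight. Expanding
`e^(−βx)` and integrating term by term once more evaluates those as a Beta function times `₁F₁`
(`integral_exp_beta`). Each exchange of sum and integral is an instance of
`hasSum_integral_mul`: a fixed integrable weight times continuous functions with summable
sup-norms.
-/

open MeasureTheory Real Set

/-- The lower incomplete gamma function `γ(a, x) = ∫₀^x t^(a−1) e^(−t) dt`. -/
noncomputable def lowerGamma (a x : ℝ) : ℝ := ∫ t in (0:ℝ)..x, t ^ (a - 1) * Real.exp (-t)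

/-- The upper incomplete gamma function `Γ(a, x) = ∫_x^∞ t^(a−1) e^(−t) dt`. -/
noncomputable def upperGamma (a x : ℝ) : ℝ := ∫ t in Set.Ioi x, t ^ (a - 1) * Real.exp (-t)

/-- The Beta function `B(a, b) = Γ(a)Γ(b)/Γ(a+b)`. -/
noncomputable def betaFn (a b : ℝ) : ℝ := Real.Gamma a * Real.Gamma b / Real.Gamma (a + b)

/-- The rising factorial (Pochhammer symbol) `(a)_k = a(a+1)⋯(a+k−1)`. -/
noncomputable def poch (a : ℝ) (k : ℕ) : ℝ := ∏ i ∈ Finset.range k, (a + i)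

/-- The confluent hypergeometric function `₁F₁(a; b; z) = Σ_k ((a)_k/(b)_k) z^k/k!`. -/
noncomputable def hyp1F1 (a b z : ℝ) : ℝ :=
  ∑' k : ℕ, (poch a k / poch b k) * z ^ k / (k.factorial : ℝ)

lemma integral_congr_Ioc {f g : ℝ → ℝ} {T : ℝ} (hT : 0 ≤ T)
    (h : ∀ x ∈ Ioc 0 T, f x = g x) : ∫ x in (0:ℝ)..T, f x = ∫ x in (0:ℝ)..T, g x := by
  rw [intervalIntegral.integral_of_le hT, intervalIntegral.integral_of_le hT]
  exact setIntegral_congr_fun measurableSet_Ioc h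

lemma hasSum_exp_real (x : ℝ) :
    HasSum (fun n : ℕ => x ^ n / (n.factorial : ℝ)) (Real.exp x) := by
  rw [Real.exp_eq_exp_ℝ]
  exact NormedSpace.expSeries_div_hasSum_exp x

/-- Termwise integration of a series of continuous functions with summable sup-norms against a
fixed integrable weight `g`, which may be unbounded. -/
lemma hasSum_integral_mul {g H : ℝ → ℝ} {h : ℕ → ℝ → ℝ} {C : ℕ → ℝ} {T : ℝ} (hT : 0 ≤ T)
    (hg : IntervalIntegrable g volume 0 T) (hc : ∀ n, ContinuousOn (h n) (Icc 0 T))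
    (hC : ∀ n, ∀ x ∈ Icc 0 T, |h n x| ≤ C n) (hs : Summable C)
    (hH : ∀ x ∈ Icc 0 T, HasSum (fun n => h n x) (H x)) :
    HasSum (fun n => ∫ x in (0:ℝ)..T, g x * h n x) (∫ x in (0:ℝ)..T, g x * H x) := by
  have hsub : ∀ x ∈ uIoc (0:ℝ) T, x ∈ Icc 0 T := by
    intro x hx
    rw [uIoc_of_le hT] at hx
    exact Ioc_subset_Icc_self hx
  apply intervalIntegral.hasSum_integral_of_dominated_convergence (fun n x => |g x| * C n)
  · intro n
    have := hg.mul_continuousOn (g := h n) (by rw [uIcc_of_le hT]; exact hc n)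
    exact (intervalIntegrable_iff.1 this).aestronglyMeasurable
  · intro n
    refine ae_of_all _ fun x hx => ?_
    rw [norm_mul, Real.norm_eq_abs, Real.norm_eq_abs]
    exact mul_le_mul_of_nonneg_left (hC n x (hsub x hx)) (abs_nonneg _)
  · exact ae_of_all _ fun x _ => hs.mul_left _
  · simp_rw [tsum_mul_left]
    exact hg.abs.mul_const _
  · exact ae_of_all _ fun x hx => (hH x (hsub x hx)).mul_left _

lemma upperGamma_eq {s y : ℝ} (hs : 0 < s) (hy : 0 ≤ y) :
    upperGamma s y = Real.Gamma s - lowerGamma s y := by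
  have hi : IntegrableOn (fun t : ℝ => t ^ (s - 1) * Real.exp (-t)) (Ioi 0) := by
    simpa only [mul_comm] using Real.GammaIntegral_convergent hs
  have h := intervalIntegral.integral_interval_add_Ioi hi (hi.mono_set (Ioi_subset_Ioi hy))
  have hG : Real.Gamma s = ∫ t in Ioi (0:ℝ), t ^ (s - 1) * Real.exp (-t) := by
    simpa only [mul_comm] using Real.Gamma_eq_integral hs
  rw [upperGamma, lowerGamma, hG, ← h]
  ring

lemma intervalIntegrable_rpow_sub_one {s y : ℝ} (hs : 0 < s) :
    IntervalIntegrable (fun t : ℝ => t ^ (s - 1)) volume 0 y :=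
  intervalIntegral.intervalIntegrable_rpow' (by linarith)

/-- Power series of the lower incomplete gamma function, from the exponential series. -/
lemma hasSum_lowerGamma {s y : ℝ} (hs : 0 < s) (hy : 0 ≤ y) :
    HasSum (fun n : ℕ => (-1 : ℝ) ^ n * y ^ (s + (n : ℝ)) / (n.factorial * (s + n)))
      (lowerGamma s y) := by
  have h := hasSum_integral_mul (g := fun t : ℝ => t ^ (s - 1)) (H := fun t => Real.exp (-t))
    (h := fun n t => (-t) ^ n / (n.factorial : ℝ)) (C := fun n => y ^ n / (n.factorial : ℝ)) hy
    (intervalIntegrable_rpow_sub_one hs) (fun n => by fun_prop)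
    (fun n x hx => by
      rw [abs_div, abs_pow, abs_neg, abs_of_nonneg hx.1, Nat.abs_cast]
      have := hx.1
      have := hx.2
      gcongr)
    (Real.summable_pow_div_factorial y) (fun x _ => hasSum_exp_real _)
  refine h.congr_fun fun n => ?_
  have e : ∫ t in (0:ℝ)..y, t ^ (s - 1) * ((-t) ^ n / (n.factorial : ℝ)) =
      ∫ t in (0:ℝ)..y, ((-1 : ℝ) ^ n / n.factorial) * t ^ (s + n - 1) := by
    refine integral_congr_Ioc hy fun t ht => ?_
    rw [show s + n - 1 = (s - 1) + (n : ℝ) by ring, Real.rpow_add ht.1, Real.rpow_natCast,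
      neg_pow]
    ring
  have hn : 0 < s + n := by positivity
  rw [e, intervalIntegral.integral_const_mul, integral_rpow (Or.inl (by linarith))]
  rw [sub_add_cancel, Real.zero_rpow hn.ne', sub_zero]
  field_simp

lemma continuous_lowerGamma {s : ℝ} (hs : 1 ≤ s) : Continuous (lowerGamma s) := by
  have hc : Continuous fun t : ℝ => t ^ (s - 1) * Real.exp (-t) :=
    (Real.continuous_rpow_const (by linarith)).mul (by fun_prop)
  exact intervalIntegral.continuous_primitive (fun a b => hc.intervalIntegrable a b) 0

lemma integral_beta_scaled {a b T : ℝ} (ha : 0 < a) (hb : 0 < b) (hT : 0 < T) :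
    ∫ x in (0:ℝ)..T, x ^ (a - 1) * (T - x) ^ (b - 1) = T ^ (a + b - 1) * betaFn a b := by
  have h := Complex.betaIntegral_scaled a b hT
  have hB : Complex.betaIntegral a b = ((betaFn a b : ℝ) : ℂ) := by
    have h1 := Complex.Gamma_mul_Gamma_eq_betaIntegral (s := a) (t := b) (by simpa) (by simpa)
    rw [← Complex.ofReal_add, Complex.Gamma_ofReal, Complex.Gamma_ofReal,
      Complex.Gamma_ofReal] at h1
    have h0 : ((Real.Gamma (a + b) : ℝ) : ℂ) ≠ 0 := by
      exact_mod_cast (Real.Gamma_pos_of_pos (add_pos ha hb)).ne'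
    rw [betaFn]
    push_cast
    rw [h1, mul_div_cancel_left₀ _ h0]
  have hL : ∫ x in (0:ℝ)..T, (x : ℂ) ^ ((a : ℂ) - 1) * ((T : ℂ) - x) ^ ((b : ℂ) - 1) =
      ((∫ x in (0:ℝ)..T, x ^ (a - 1) * (T - x) ^ (b - 1) : ℝ) : ℂ) := by
    rw [← intervalIntegral.integral_ofReal, intervalIntegral.integral_of_le hT.le,
      intervalIntegral.integral_of_le hT.le]
    refine setIntegral_congr_fun measurableSet_Ioc fun x hx => ?_
    have h1 : 0 ≤ T - x := by linarith [hx.2]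
    simp only [Complex.ofReal_mul, Complex.ofReal_cpow hx.1.le, Complex.ofReal_cpow h1,
      Complex.ofReal_sub, Complex.ofReal_one]
  rw [hL, hB] at h
  apply Complex.ofReal_injective
  rw [h, Complex.ofReal_mul, Complex.ofReal_cpow hT.le]
  push_cast
  rfl

lemma gamma_add_nat {a : ℝ} (ha : 0 < a) (k : ℕ) :
    Real.Gamma (a + k) = poch a k * Real.Gamma a := by
  induction k with
  | zero => simp [poch]
  | succ k ih =>
    have : a + k ≠ 0 := by positivity
    rw [Nat.cast_succ, ← add_assoc, Real.Gamma_add_one this, ih, poch, poch,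
      Finset.prod_range_succ]
    ring

lemma betaFn_add_nat {a b : ℝ} (ha : 0 < a) (hb : 0 < b) (k : ℕ) :
    betaFn (a + k) b = betaFn b a * (poch a k / poch (a + b) k) := by
  rw [betaFn, betaFn, show a + k + b = a + b + k by ring, gamma_add_nat ha,
    gamma_add_nat (add_pos ha hb), add_comm b a, div_mul_div_comm]
  congr 1 <;> ring

/-- Euler's integral for `₁F₁`, rescaled to `[0, T]`, with the exponent of `T - x` kept
nonnegative so that only the endpoint `0` is singular. -/
lemma integral_exp_beta {a b β T : ℝ} (ha : 0 < a) (hb : 1 ≤ b) (hβ : 0 < β) (hT : 0 < T) :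
    ∫ x in (0:ℝ)..T, x ^ (a - 1) * ((T - x) ^ (b - 1) * Real.exp (-(β * x))) =
      T ^ (a + b - 1) * betaFn b a * hyp1F1 a (a + b) (-(β * T)) := by
  have hb0 : 0 ≤ b - 1 := by linarith
  have hc : Continuous fun x : ℝ => (T - x) ^ (b - 1) :=
    (Real.continuous_rpow_const hb0).comp (by fun_prop)
  have h := hasSum_integral_mul (g := fun t : ℝ => t ^ (a - 1))
    (H := fun x => (T - x) ^ (b - 1) * Real.exp (-(β * x)))
    (h := fun n x => (T - x) ^ (b - 1) * ((-(β * x)) ^ n / (n.factorial : ℝ)))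
    (C := fun n => T ^ (b - 1) * ((β * T) ^ n / (n.factorial : ℝ))) hT.le
    (intervalIntegrable_rpow_sub_one ha)
    (fun n => (hc.mul (by fun_prop)).continuousOn)
    (fun n x hx => by
      have h1 := hx.1
      have h2 := hx.2
      have h3 : 0 ≤ T - x := by linarith
      rw [abs_mul, abs_div, abs_pow, abs_neg, abs_of_nonneg (by positivity : 0 ≤ β * x),
        Nat.abs_cast, abs_of_nonneg (Real.rpow_nonneg h3 _)]
      gcongr
      linarith)
    ((Real.summable_pow_div_factorial _).mul_left _)
    (fun x _ => (hasSum_exp_real _).mul_left _)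
  rw [← h.tsum_eq, hyp1F1, ← tsum_mul_left]
  refine tsum_congr fun k => ?_
  have e : ∫ x in (0:ℝ)..T, x ^ (a - 1) *
        ((T - x) ^ (b - 1) * ((-(β * x)) ^ k / (k.factorial : ℝ))) =
      ∫ x in (0:ℝ)..T, ((-β) ^ k / k.factorial) * (x ^ (a + k - 1) * (T - x) ^ (b - 1)) := by
    refine integral_congr_Ioc hT.le fun x hx => ?_
    rw [show a + k - 1 = (a - 1) + (k : ℝ) by ring, Real.rpow_add hx.1, Real.rpow_natCast,
      ← neg_mul, mul_pow]
    ring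
  rw [e, intervalIntegral.integral_const_mul,
    integral_beta_scaled (by positivity) (by linarith) hT, betaFn_add_nat ha (by linarith),
    show a + k + b - 1 = (a + b - 1) + (k : ℝ) by ring, Real.rpow_add hT, Real.rpow_natCast,
    ← neg_mul, mul_pow]
  ring

theorem f2_integral (α β Tc : ℝ) (hα : 0 < α) (hβ : 0 < β) (hTc : 0 < Tc) :
    ∫ x in (0:ℝ)..Tc,
        (upperGamma (α + 1) (β * (Tc - x)) / (β * Real.Gamma α))
          * (β ^ α * x ^ (α - 1) * Real.exp (-(β * x)) / Real.Gamma α) =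
      α * lowerGamma α (β * Tc) / (β * Real.Gamma α)
        - (Tc / Real.Gamma α ^ 2)
          * ∑' n : ℕ, ((-1 : ℝ) ^ n * (β * Tc) ^ (2 * α + (n : ℝ)) / (n.factorial * (α + n + 1)))
              * betaFn (α + n + 2) α * hyp1F1 α (2 * α + n + 2) (-(β * Tc)) := by
  have hΓ : 0 < Real.Gamma α := Real.Gamma_pos_of_pos hα
  have hg : IntervalIntegrable (fun t : ℝ => t ^ (α - 1)) volume 0 Tc :=
    intervalIntegrable_rpow_sub_one hα
  have hexp : Continuous fun x : ℝ => Real.exp (-(β * x)) := by fun_prop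
  have hlow : Continuous fun x : ℝ => lowerGamma (α + 1) (β * (Tc - x)) :=
    (continuous_lowerGamma (by linarith)).comp (by fun_prop)
  have hi1 : IntervalIntegrable (fun x : ℝ => x ^ (α - 1) * Real.exp (-(β * x))) volume 0 Tc :=
    hg.mul_continuousOn hexp.continuousOn
  have hi2 : IntervalIntegrable (fun x : ℝ => x ^ (α - 1) *
      (lowerGamma (α + 1) (β * (Tc - x)) * Real.exp (-(β * x)))) volume 0 Tc :=
    hg.mul_continuousOn (hlow.mul hexp).continuousOn
  have hsplit : ∫ x in (0:ℝ)..Tc,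
        (upperGamma (α + 1) (β * (Tc - x)) / (β * Real.Gamma α))
          * (β ^ α * x ^ (α - 1) * Real.exp (-(β * x)) / Real.Gamma α) =
      (α * β ^ α / (β * Real.Gamma α)) * (∫ x in (0:ℝ)..Tc, x ^ (α - 1) * Real.exp (-(β * x)))
      - (β ^ α / (β * Real.Gamma α ^ 2)) * ∫ x in (0:ℝ)..Tc, x ^ (α - 1) *
          (lowerGamma (α + 1) (β * (Tc - x)) * Real.exp (-(β * x))) := by
    rw [← intervalIntegral.integral_const_mul, ← intervalIntegral.integral_const_mul,
      ← intervalIntegral.integral_sub (hi1.const_mul _) (hi2.const_mul _)]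
    refine integral_congr_Ioc hTc.le fun x hx => ?_
    have h1 : 0 ≤ β * (Tc - x) := mul_nonneg hβ.le (by linarith [hx.2])
    rw [upperGamma_eq (by linarith) h1, Real.Gamma_add_one hα.ne']
    field_simp
  have hfirst : β ^ α * ∫ x in (0:ℝ)..Tc, x ^ (α - 1) * Real.exp (-(β * x)) =
      lowerGamma α (β * Tc) := by
    have h := intervalIntegral.mul_integral_comp_mul_left (a := 0) (b := Tc)
      (f := fun t : ℝ => t ^ (α - 1) * Real.exp (-t)) β
    rw [mul_zero] at h
    rw [lowerGamma, ← h, ← intervalIntegral.integral_const_mul,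
      ← intervalIntegral.integral_const_mul]
    refine integral_congr_Ioc hTc.le fun x hx => ?_
    rw [Real.mul_rpow hβ.le hx.1.le, Real.rpow_sub_one hβ.ne']
    field_simp
  have hsecond := hasSum_integral_mul (g := fun t : ℝ => t ^ (α - 1))
    (H := fun x => lowerGamma (α + 1) (β * (Tc - x)) * Real.exp (-(β * x)))
    (h := fun n x => ((-1 : ℝ) ^ n * (β * (Tc - x)) ^ (α + 1 + (n : ℝ)) /
      (n.factorial * (α + 1 + n))) * Real.exp (-(β * x)))
    (C := fun n => (β * Tc) ^ (α + 1) * ((β * Tc) ^ n / (n.factorial : ℝ))) hTc.le hg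
    (fun n => by
      have hc : Continuous fun x : ℝ => (β * (Tc - x)) ^ (α + 1 + (n : ℝ)) :=
        (Real.continuous_rpow_const (by positivity)).comp (by fun_prop)
      exact (((continuous_const.mul hc).div_const _).mul hexp).continuousOn)
    (fun n x hx => by
      have h1 := hx.1
      have h3 : 0 ≤ Tc - x := by linarith [hx.2]
      have h4 : Real.exp (-(β * x)) ≤ 1 := Real.exp_le_one_iff.2 (by nlinarith)
      have h5 : (β * (Tc - x)) ^ (α + 1 + (n : ℝ)) ≤ (β * Tc) ^ (α + 1 + (n : ℝ)) := by
        gcongr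
        linarith
      have hfac : (0 : ℝ) < n.factorial := by positivity
      have h6 : (n.factorial : ℝ) ≤ n.factorial * (α + 1 + n) :=
        le_mul_of_one_le_right hfac.le (by linarith [(Nat.cast_nonneg n : (0:ℝ) ≤ n)])
      rw [abs_mul, abs_div, abs_mul, abs_pow, abs_neg, abs_one, one_pow, one_mul, Real.abs_exp,
        abs_of_nonneg (by positivity : (0:ℝ) ≤ n.factorial * (α + 1 + n)),
        abs_of_nonneg (by positivity : (0:ℝ) ≤ (β * (Tc - x)) ^ (α + 1 + (n : ℝ)))]
      calc _ ≤ (β * (Tc - x)) ^ (α + 1 + (n : ℝ)) / (n.factorial * (α + 1 + n)) * 1 := by gcongr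
        _ ≤ (β * Tc) ^ (α + 1 + (n : ℝ)) / n.factorial := by
            rw [mul_one]
            gcongr
        _ = _ := by
            rw [Real.rpow_add (by positivity), Real.rpow_natCast]
            ring)
    ((Real.summable_pow_div_factorial _).mul_left _)
    (fun x hx => (hasSum_lowerGamma (by linarith)
      (mul_nonneg hβ.le (by linarith [hx.2]))).mul_right _)
  rw [hsplit, ← hsecond.tsum_eq, ← hfirst, ← tsum_mul_left, ← tsum_mul_left]
  congr 1
  · ring
  refine tsum_congr fun n => ?_
  have e : ∫ x in (0:ℝ)..Tc, x ^ (α - 1) * (((-1 : ℝ) ^ n * (β * (Tc - x)) ^ (α + 1 + (n : ℝ)) /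
      (n.factorial * (α + 1 + n))) * Real.exp (-(β * x))) =
      ∫ x in (0:ℝ)..Tc, ((-1 : ℝ) ^ n * β ^ (α + 1 + (n : ℝ)) / (n.factorial * (α + 1 + n))) *
        (x ^ (α - 1) * ((Tc - x) ^ (α + n + 2 - 1) * Real.exp (-(β * x)))) := by
    refine integral_congr_Ioc hTc.le fun x hx => ?_
    rw [Real.mul_rpow hβ.le (by linarith [hx.2] : 0 ≤ Tc - x),
      show α + n + 2 - 1 = α + 1 + (n : ℝ) by ring]
    ring
  have hn : (0:ℝ) ≤ n := Nat.cast_nonneg n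
  rw [e, intervalIntegral.integral_const_mul,
    integral_exp_beta hα (by linarith : 1 ≤ α + n + 2) hβ hTc,
    show α + (α + n + 2) - 1 = (2 * α + n) + 1 by ring,
    show α + (α + n + 2) = 2 * α + n + 2 by ring,
    Real.rpow_add_one hTc.ne', Real.mul_rpow hβ.le hTc.le,
    show α + n + 1 = α + 1 + (n : ℝ) by ring]
  have hpow : β ^ (2 * α + (n : ℝ)) * β = β ^ α * β ^ (α + 1 + (n : ℝ)) := by
    rw [← Real.rpow_add_one hβ.ne', ← Real.rpow_add hβ]
    congr 1
    ring
  have hβn : β ^ (2 * α + (n : ℝ)) = β ^ α * β ^ (α + 1 + (n : ℝ)) / β := by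
    rw [← hpow, mul_div_cancel_right₀ _ hβ.ne']
  rw [hβn]
  field_simp
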